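/- arXiv:2208.02054 — 5 statements merged into one kernel-verified Lean document; each statement's English description precedes it below -/
import Mathlib

section
/- Let N ≥ 1 and for j = 1, …, N define a⁰_j = ((N−j+2)·sin(πj/(N+1)) − (N−j+1)·sin(π(j−1)/(N+1))) / ((N+1)·sin(π/(N+1))). Then a⁰_1 = 1, the trigonometric polynomial ∑_{j=1}^{N} a⁰_j·cos((2j−1)t) is nonnegative for all t ∈ [0, π/2], and ∑_{j=1}^{N} (−1)^{j+1} a⁰_j = 1/(2·cos²(π/(2N+2))). -/
open Real Finset

/-!
Write `θ = π / (N + 1)` and let `r m = ∑ k < N - m, sin ((k + 1) θ) * sin ((k + 1 + m) θ)` be the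
autocorrelation of the sine sequence. Summing `r m` in closed form shows that `a⁰_{m + 1}` is
proportional to `r m + r (m + 1)`. By the Fejér identity the cosine polynomial is then
`cos t * |∑ k < N, sin ((k + 1) θ) exp (2 i k t)| ^ 2` up to a positive factor, while the
alternating sum of the coefficients telescopes to a multiple of `r 0 = (N + 1) / 2`.
-/

section Autocorrelation

variable {R : Type*} [Semiring R]

/-- The aperiodic autocorrelation at lag `m` of the first `n` terms of a sequence. The truncated
subtraction makes it vanish for `n ≤ m`. -/
def autocorr (x : ℕ → R) (n m : ℕ) : R :=
  ∑ k ∈ range (n - m), x k * x (k + m)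

theorem autocorr_eq_zero_of_le (x : ℕ → R) {n m : ℕ} (h : n ≤ m) :
    autocorr x n m = 0 := by
  simp [autocorr, Nat.sub_eq_zero_of_le h]

theorem autocorr_succ_left (x : ℕ → R) {n m : ℕ} (h : m ≤ n) :
    autocorr x (n + 1) m = autocorr x n m + x (n - m) * x n := by
  rw [autocorr, Nat.succ_sub h, sum_range_succ, Nat.sub_add_cancel h, autocorr]

theorem sum_autocorr_succ_left_mul_cos (x : ℕ → ℝ) (n : ℕ) (t : ℝ) :
    ∑ m ∈ range (n + 1), autocorr x (n + 1) (m + 1) * cos ((m + 1) * t) =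
      ∑ m ∈ range n, autocorr x n (m + 1) * cos ((m + 1) * t) +
        x n * ∑ k ∈ range n, x k * cos (n * t - k * t) := by
  rw [sum_range_succ, autocorr_eq_zero_of_le x le_rfl, zero_mul, add_zero,
    ← sum_range_reflect (fun k ↦ x k * cos (n * t - k * t)), mul_sum, ← sum_add_distrib]
  refine sum_congr rfl fun m hm ↦ ?_
  have hmn : m + 1 ≤ n := mem_range.mp hm
  have hlag : n * t - ↑(n - 1 - m) * t = (m + 1) * t := by
    rw [Nat.sub_sub, add_comm 1 m, Nat.cast_sub hmn]
    push_cast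
    ring
  rw [autocorr_succ_left x hmn, hlag, Nat.sub_sub, add_comm 1 m]
  ring

theorem sq_sum_cos_add_sq_sum_sin (x : ℕ → ℝ) (n : ℕ) (t : ℝ) :
    (∑ k ∈ range n, x k * cos (k * t)) ^ 2 + (∑ k ∈ range n, x k * sin (k * t)) ^ 2 =
      autocorr x n 0 + 2 * ∑ m ∈ range n, autocorr x n (m + 1) * cos ((m + 1) * t) := by
  induction n with
  | zero => simp [autocorr]
  | succ n ih =>
    have hcross : ∑ k ∈ range n, x k * cos (n * t - k * t) =
        cos (n * t) * ∑ k ∈ range n, x k * cos (k * t) +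
          sin (n * t) * ∑ k ∈ range n, x k * sin (k * t) := by
      rw [mul_sum, mul_sum, ← sum_add_distrib]
      refine sum_congr rfl fun k _ ↦ ?_
      rw [cos_sub]
      ring
    rw [sum_autocorr_succ_left_mul_cos, autocorr_succ_left x n.zero_le, hcross, Nat.sub_zero,
      sum_range_succ, sum_range_succ]
    linear_combination ih + x n ^ 2 * sin_sq_add_cos_sq (n * t)

end Autocorrelation

section FiniteSums

theorem sum_Icc_one_eq_sum_range {M : Type*} [AddCommMonoid M] (f : ℕ → M) (n : ℕ) :
    ∑ j ∈ Icc 1 n, f j = ∑ k ∈ range n, f (k + 1) := by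
  rw [range_eq_Ico, sum_Ico_add' f 0 n 1, zero_add, Ico_add_one_right_eq_Icc]

theorem sum_add_succ_mul_cos (r : ℕ → ℝ) (n : ℕ) (t : ℝ) :
    ∑ m ∈ range n, (r m + r (m + 1)) * cos ((2 * m + 1) * t) =
      cos t * (r 0 + 2 * ∑ m ∈ range n, r (m + 1) * cos ((m + 1) * (2 * t))) -
        r n * cos ((2 * n + 1) * t) := by
  induction n with
  | zero => simp [mul_comm]
  | succ n ih =>
    have hprod : 2 * cos ((n + 1) * (2 * t)) * cos t =
        cos ((2 * n + 1) * t) + cos ((2 * ↑(n + 1) + 1) * t) := by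
      rw [two_mul_cos_mul_cos]
      push_cast
      ring_nf
    rw [sum_range_succ, sum_range_succ, ih]
    linear_combination -r (n + 1) * hprod

theorem sum_neg_one_pow_mul_add_succ {R : Type*} [Ring R] (r : ℕ → R) (n : ℕ) :
    ∑ m ∈ range n, (-1) ^ m * (r m + r (m + 1)) = r 0 - (-1) ^ n * r n := by
  have h := sum_range_sub' (fun m ↦ (-1) ^ m * r m) n
  simpa [pow_succ, mul_add] using h

theorem sum_autocorr_add_succ_mul_cos (x : ℕ → ℝ) (n : ℕ) (t : ℝ) :
    ∑ m ∈ range n, (autocorr x n m + autocorr x n (m + 1)) * cos ((2 * m + 1) * t) =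
      cos t * ((∑ k ∈ range n, x k * cos (k * (2 * t))) ^ 2 +
        (∑ k ∈ range n, x k * sin (k * (2 * t))) ^ 2) := by
  rw [sum_add_succ_mul_cos, autocorr_eq_zero_of_le x le_rfl, sq_sum_cos_add_sq_sum_sin, zero_mul,
    sub_zero]

end FiniteSums

section SineSequence

/-- The sequence `sin θ, sin (2θ), sin (3θ), …`, indexed from `0`, whose autocorrelations at
`θ = π / (N + 1)` generate the extremal coefficients. -/
noncomputable def sineSeq (θ : ℝ) (k : ℕ) : ℝ :=
  sin ((k + 1) * θ)

theorem four_mul_sin_mul_sum_sin_mul_sin_add (θ φ : ℝ) (p : ℕ) :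
    4 * sin θ * ∑ k ∈ range p, sin ((k + 1) * θ) * sin ((k + 1) * θ + φ) =
      2 * p * sin θ * cos φ + sin (θ + φ) - sin ((2 * p + 1) * θ + φ) := by
  induction p with
  | zero => simp
  | succ p ih =>
    have hprod : 2 * sin ((p + 1) * θ) * sin ((p + 1) * θ + φ) =
        cos φ - cos (2 * (p + 1) * θ + φ) := by
      rw [two_mul_sin_mul_sin, ← cos_neg φ]
      ring_nf
    have hdiff : 2 * sin θ * cos (2 * (p + 1) * θ + φ) =
        sin ((2 * ↑(p + 1) + 1) * θ + φ) - sin ((2 * p + 1) * θ + φ) := by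
      rw [sin_sub_sin]
      push_cast
      ring_nf
    rw [sum_range_succ]
    push_cast at hdiff ⊢
    linear_combination ih + 2 * sin θ * hprod - hdiff

variable {θ : ℝ} {n m : ℕ}

theorem two_mul_sin_mul_autocorr_sineSeq (hθ : sin ((n + 1) * θ) = 0) (hm : m ≤ n) :
    2 * sin θ * autocorr (sineSeq θ) n m =
      (n - m) * sin θ * cos (m * θ) + sin ((m + 1) * θ) := by
  have hsum : autocorr (sineSeq θ) n m =
      ∑ k ∈ range (n - m), sin ((k + 1) * θ) * sin ((k + 1) * θ + m * θ) := by
    refine sum_congr rfl fun k _ ↦ ?_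
    simp only [sineSeq, Nat.cast_add]
    ring_nf
  have hreflect : sin ((2 * (n - m) + 1) * θ + m * θ) = -sin ((m + 1) * θ) := by
    rw [show (2 * (n - m) + 1) * θ + m * θ = 2 * ((n + 1) * θ) - (m + 1) * θ by ring,
      sin_sub, sin_two_mul, cos_two_mul', hθ, cos_sq', hθ]
    ring
  have h := four_mul_sin_mul_sum_sin_mul_sin_add θ (m * θ) (n - m)
  rw [← hsum, Nat.cast_sub hm, hreflect, show θ + m * θ = (m + 1) * θ by ring] at h
  linear_combination h / 2

theorem two_mul_autocorr_sineSeq_zero (hθ : sin ((n + 1) * θ) = 0) (hsin : sin θ ≠ 0) :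
    2 * autocorr (sineSeq θ) n 0 = n + 1 := by
  have h := two_mul_sin_mul_autocorr_sineSeq hθ n.zero_le
  simp only [Nat.cast_zero, sub_zero, zero_mul, cos_zero, mul_one, zero_add, one_mul] at h
  exact mul_left_cancel₀ hsin (by linear_combination h)

theorem two_mul_sin_mul_autocorr_sineSeq_add_succ (hθ : sin ((n + 1) * θ) = 0) (hm : m < n) :
    2 * sin θ * (autocorr (sineSeq θ) n m + autocorr (sineSeq θ) n (m + 1)) =
      (1 + cos θ) * ((n - m + 1) * sin ((m + 1) * θ) - (n - m) * sin (m * θ)) := by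
  have h₀ := two_mul_sin_mul_autocorr_sineSeq hθ hm.le
  have h₁ := two_mul_sin_mul_autocorr_sineSeq hθ hm.nat_succ_le
  have hsin : sin ((m + 1) * θ) = sin (m * θ) * cos θ + cos (m * θ) * sin θ := by
    rw [add_one_mul, sin_add]
  have hcos : cos ((m + 1) * θ) = cos (m * θ) * cos θ - sin (m * θ) * sin θ := by
    rw [add_one_mul, cos_add]
  have hsin_succ :
      sin ((m + 1 + 1) * θ) = sin ((m + 1) * θ) * cos θ + cos ((m + 1) * θ) * sin θ := by
    rw [add_one_mul (m + 1 : ℝ), sin_add]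
  rw [Nat.cast_succ, hsin_succ, hcos, hsin] at h₁
  rw [hsin] at h₀ ⊢
  linear_combination h₀ + h₁ - (n - m) * sin (m * θ) * sin_sq_add_cos_sq θ

end SineSequence

section ExtremalCoefficients

theorem sin_pi_div_add_one_pos {N : ℕ} (hN : 1 ≤ N) : 0 < sin (π / (N + 1)) := by
  have hN' : (1 : ℝ) ≤ N := mod_cast hN
  exact sin_pos_of_pos_of_lt_pi (by positivity) (div_lt_self pi_pos (by linarith))

theorem sin_add_one_mul_pi_div_add_one (N : ℕ) : sin ((N + 1) * (π / (N + 1))) = 0 := by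
  have hN : (N : ℝ) + 1 ≠ 0 := by positivity
  rw [mul_div_cancel₀ _ hN, sin_pi]

theorem one_add_cos_pos_of_sin_ne_zero {θ : ℝ} (h : sin θ ≠ 0) : 0 < 1 + cos θ := by
  have hnonneg : 0 ≤ 1 + cos θ := by linarith [neg_one_le_cos θ]
  refine hnonneg.lt_of_ne' fun hcos ↦ h ?_
  exact sin_eq_zero_iff_cos_eq.mpr (Or.inr (by linarith))

/-- The coefficient `a⁰_j` of `z ^ (2j - 1)` in the extremal polynomial of degree `2N - 1`,
meaningful for `1 ≤ j ≤ N`. -/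
noncomputable def extremalCoeff (N j : ℕ) : ℝ :=
  (((N : ℝ) - j + 2) * sin (π * j / (N + 1)) -
    ((N : ℝ) - j + 1) * sin (π * (j - 1) / (N + 1))) / ((N + 1) * sin (π / (N + 1)))

theorem extremalCoeff_one {N : ℕ} (hN : 1 ≤ N) : extremalCoeff N 1 = 1 := by
  have hsin := (sin_pi_div_add_one_pos hN).ne'
  have hN' : (N : ℝ) + 1 ≠ 0 := by positivity
  have hfirst : (N : ℝ) - 1 + 2 = N + 1 := by ring
  simp only [extremalCoeff, Nat.cast_one, mul_one, sub_self, mul_zero, zero_div, sin_zero, sub_zero]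
  rw [hfirst, div_self (mul_ne_zero hN' hsin)]

theorem extremalCoeff_succ_eq_autocorr {N m : ℕ} (hm : m < N) :
    extremalCoeff N (m + 1) = 2 / ((N + 1) * (1 + cos (π / (N + 1)))) *
      (autocorr (sineSeq (π / (N + 1))) N m + autocorr (sineSeq (π / (N + 1))) N (m + 1)) := by
  have hsin := (sin_pi_div_add_one_pos (Nat.one_le_of_lt hm)).ne'
  have hcos := (one_add_cos_pos_of_sin_ne_zero hsin).ne'
  have hN : (N : ℝ) + 1 ≠ 0 := by positivity
  have h := two_mul_sin_mul_autocorr_sineSeq_add_succ (sin_add_one_mul_pi_div_add_one N) hm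
  have hnum : extremalCoeff N (m + 1) =
      ((N - m + 1) * sin ((m + 1) * (π / (N + 1))) - (N - m) * sin (m * (π / (N + 1)))) /
        ((N + 1) * sin (π / (N + 1))) := by
    rw [extremalCoeff]
    push_cast
    ring_nf
  rw [hnum, div_mul_eq_mul_div, div_eq_div_iff (mul_ne_zero hN hsin) (mul_ne_zero hN hcos)]
  linear_combination -(N + 1) * h

theorem sum_extremalCoeff_mul_cos (N : ℕ) (t : ℝ) :
    ∑ j ∈ Icc 1 N, extremalCoeff N j * cos ((2 * (j : ℝ) - 1) * t) =
      2 / ((N + 1) * (1 + cos (π / (N + 1)))) * (cos t *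
        ((∑ k ∈ range N, sineSeq (π / (N + 1)) k * cos (k * (2 * t))) ^ 2 +
          (∑ k ∈ range N, sineSeq (π / (N + 1)) k * sin (k * (2 * t))) ^ 2)) := by
  rw [sum_Icc_one_eq_sum_range, ← sum_autocorr_add_succ_mul_cos, mul_sum]
  refine sum_congr rfl fun m hm ↦ ?_
  have hfreq : 2 * ((m + 1 : ℕ) : ℝ) - 1 = 2 * m + 1 := by
    push_cast
    ring
  rw [extremalCoeff_succ_eq_autocorr (mem_range.mp hm), hfreq, mul_assoc]

theorem sum_extremalCoeff_mul_cos_nonneg (N : ℕ) {t : ℝ} (ht : 0 ≤ cos t) :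
    0 ≤ ∑ j ∈ Icc 1 N, extremalCoeff N j * cos ((2 * (j : ℝ) - 1) * t) := by
  have hcos : 0 ≤ 1 + cos (π / (N + 1)) := by linarith [neg_one_le_cos (π / (N + 1))]
  rw [sum_extremalCoeff_mul_cos]
  positivity

theorem sum_neg_one_pow_mul_extremalCoeff {N : ℕ} (hN : 1 ≤ N) :
    ∑ j ∈ Icc 1 N, (-1) ^ (j + 1) * extremalCoeff N j = 1 / (1 + cos (π / (N + 1))) := by
  have hsin := (sin_pi_div_add_one_pos hN).ne'
  have hN' : (N : ℝ) + 1 ≠ 0 := by positivity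
  have henergy := two_mul_autocorr_sineSeq_zero (sin_add_one_mul_pi_div_add_one N) hsin
  set r := autocorr (sineSeq (π / (N + 1))) N with hr
  set C : ℝ := 2 / ((N + 1) * (1 + cos (π / (N + 1)))) with hC
  calc ∑ j ∈ Icc 1 N, (-1) ^ (j + 1) * extremalCoeff N j
      = ∑ m ∈ range N, C * ((-1) ^ m * (r m + r (m + 1))) := by
        rw [sum_Icc_one_eq_sum_range]
        refine sum_congr rfl fun m hm ↦ ?_
        rw [extremalCoeff_succ_eq_autocorr (mem_range.mp hm)]
        ring
    _ = C * r 0 := by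
        rw [← mul_sum, sum_neg_one_pow_mul_add_succ, hr, autocorr_eq_zero_of_le _ le_rfl,
          mul_zero, sub_zero]
    _ = (N + 1) / ((N + 1) * (1 + cos (π / (N + 1)))) := by
        rw [hC, ← henergy]
        ring
    _ = 1 / (1 + cos (π / (N + 1))) := by rw [div_mul_cancel_left₀ hN', one_div]

end ExtremalCoefficients

theorem extremal_coeffs_properties (N : ℕ) (hN : 1 ≤ N) (a0 : ℕ → ℝ)
    (ha0 : ∀ j, a0 j =
      (((N : ℝ) - j + 2) * Real.sin (π * j / (N + 1)) -
        ((N : ℝ) - j + 1) * Real.sin (π * (j - 1) / (N + 1))) /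
      ((N + 1) * Real.sin (π / (N + 1)))) :
    a0 1 = 1 ∧
    (∀ t ∈ Set.Icc (0 : ℝ) (π / 2),
      0 ≤ ∑ j ∈ Finset.Icc 1 N, a0 j * Real.cos ((2 * (j : ℝ) - 1) * t)) ∧
    ∑ j ∈ Finset.Icc 1 N, (-1 : ℝ) ^ (j + 1) * a0 j =
      1 / (2 * Real.cos (π / (2 * N + 2)) ^ 2) := by
  obtain rfl : a0 = extremalCoeff N := funext ha0
  refine ⟨extremalCoeff_one hN, fun t ht ↦ ?_, ?_⟩
  · have hcos : 0 ≤ cos t := cos_nonneg_of_neg_pi_div_two_le_of_le (by linarith [ht.1, pi_pos]) ht.2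
    exact sum_extremalCoeff_mul_cos_nonneg N hcos
  · have hhalf : 2 * cos (π / (2 * N + 2)) ^ 2 = 1 + cos (π / (N + 1)) := by
      have hangle : π / (N + 1) = 2 * (π / (2 * N + 2)) := by field_simp
      rw [hangle, cos_two_mul]
      ring
    rw [sum_neg_one_pow_mul_extremalCoeff hN, hhalf]
end

section
/- Let N ≥ 1 and let F⁰(z) = ∑_{j=1}^{N} a⁰_j z^{2j−1} with a⁰_j = ((N−j+2)·sin(πj/(N+1)) − (N−j+1)·sin(π(j−1)/(N+1)))/((N+1)·sin(π/(N+1))). Then for every real t with cos(2t) ≠ cos(π/(N+1)), Re F⁰(e^{it}) = (4·sin²(π/(2N+2))/(N+1)) · cos(t)·cos²((N+1)t) / (cos(2t) − cos(π/(N+1)))². -/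
open Real Finset

/-!
Let `L` be the operator `f ↦ f (j + 2) + f j - c * f (j + 1)`. If `g` satisfies
`g (j + 2) + g j = d * g (j + 1)`, then summation by parts turns `(d - c) * ∑ f g` into
`∑ (L f) g` plus a boundary term, the increment of the Casoratian of `f` and `g`. With
`θ = π / (N + 1)` and `c = 2 cos θ`, the numerators of the extremal coefficients are killed by
`L ^ 2`, since they combine sines of multiples of `θ` with weights affine in `j`. Pairing them
with `g j = cos ((2 j - 1) t)`, for which `d = 2 cos (2 t)`, and summing by parts twice therefore
leaves only boundary terms in `(d - c) ^ 2 * ∑ f g`.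
-/

section Casoratian

variable {R : Type*} [CommRing R]

/-- The Casoratian (discrete Wronskian) of two sequences; it is the boundary term when second-order
difference operators are summed by parts. -/
def casoratian (f g : ℕ → R) (n : ℕ) : R :=
  f n * g (n + 1) - f (n + 1) * g n

variable {f g r : ℕ → R} {c d : R}

lemma sub_mul_sum_Icc_mul_eq_casoratian (hf : ∀ j, f (j + 2) + f j = c * f (j + 1) + r (j + 1))
    (hg : ∀ j, g (j + 2) + g j = d * g (j + 1)) (n : ℕ) :
    (d - c) * ∑ j ∈ Icc 1 n, f j * g j =
      casoratian f g n - casoratian f g 0 + ∑ j ∈ Icc 1 n, r j * g j := by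
  induction n with
  | zero => simp
  | succ n ih =>
    have h_term : (d - c) * (f (n + 1) * g (n + 1)) =
        casoratian f g (n + 1) - casoratian f g n + r (n + 1) * g (n + 1) := by
      unfold casoratian
      linear_combination g (n + 1) * hf n - f (n + 1) * hg n
    rw [sum_Icc_succ_top (by lia), sum_Icc_succ_top (by lia), mul_add, ih, h_term]
    ring

lemma sub_sq_mul_sum_Icc_mul_eq_casoratian (hf : ∀ j, f (j + 2) + f j = c * f (j + 1) + r (j + 1))
    (hr : ∀ j, r (j + 2) + r j = c * r (j + 1)) (hg : ∀ j, g (j + 2) + g j = d * g (j + 1))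
    (n : ℕ) :
    (d - c) ^ 2 * ∑ j ∈ Icc 1 n, f j * g j =
      (d - c) * (casoratian f g n - casoratian f g 0) +
        (casoratian r g n - casoratian r g 0) := by
  have hsum_f := sub_mul_sum_Icc_mul_eq_casoratian hf hg n
  have hsum_r : (d - c) * ∑ j ∈ Icc 1 n, r j * g j = casoratian r g n - casoratian r g 0 := by
    simpa using sub_mul_sum_Icc_mul_eq_casoratian (r := 0) (by simpa using hr) hg n
  linear_combination (d - c) * hsum_f + hsum_r

end Casoratian

/-- The sequence `cos ((2 j - 1) t)`, the real parts of the odd powers of `exp (i t)`. -/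
noncomputable def oddCos (t : ℝ) (j : ℕ) : ℝ :=
  cos ((2 * j - 1) * t)

/-- The numerator of the extremal coefficient `a⁰_j`, with `N` replaced by a real parameter `M`
and the angle `π / (N + 1)` by an arbitrary `θ`. -/
noncomputable def extremalNumerator (M θ : ℝ) (j : ℕ) : ℝ :=
  (M - j + 2) * sin (j * θ) - (M - j + 1) * sin ((j - 1) * θ)

/-- The defect of `extremalNumerator M θ` in the recurrence `f (j + 2) + f j = 2 cos θ f (j + 1)`;
it does not depend on `M`. -/
noncomputable def extremalDefect (θ : ℝ) (j : ℕ) : ℝ :=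
  2 * sin θ * (cos ((j - 1) * θ) - cos (j * θ))

lemma re_sum_ofReal_mul_exp_pow_odd (a : ℕ → ℝ) (t : ℝ) (n : ℕ) :
    (∑ j ∈ Icc 1 n, (a j : ℂ) * Complex.exp (t * Complex.I) ^ (2 * j - 1)).re =
      ∑ j ∈ Icc 1 n, a j * oddCos t j := by
  rw [Complex.re_sum]
  refine sum_congr rfl fun j hj ↦ ?_
  have h_cast : ((2 * j - 1 : ℕ) : ℝ) = 2 * j - 1 := by
    have h_one_le := (mem_Icc.mp hj).1
    rw [Nat.cast_sub (by lia), Nat.cast_mul, Nat.cast_ofNat, Nat.cast_one]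
  have h_exp : Complex.exp (t * Complex.I) ^ (2 * j - 1) =
      Complex.exp (((2 * j - 1) * t : ℝ) * Complex.I) := by
    rw [← Complex.exp_nat_mul, ← h_cast]
    push_cast
    ring_nf
  rw [h_exp, Complex.re_ofReal_mul, Complex.exp_ofReal_mul_I_re, oddCos]

lemma sin_add_one_mul_add_sin_sub_one_mul (x θ : ℝ) :
    sin ((x + 1) * θ) + sin ((x - 1) * θ) = 2 * cos θ * sin (x * θ) := by
  rw [add_one_mul, sub_one_mul, sin_add, sin_sub]
  ring

lemma sin_add_one_mul_sub_sin_sub_one_mul (x θ : ℝ) :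
    sin ((x + 1) * θ) - sin ((x - 1) * θ) = 2 * sin θ * cos (x * θ) := by
  rw [add_one_mul, sub_one_mul, sin_add, sin_sub]
  ring

lemma cos_add_one_mul_add_cos_sub_one_mul (x θ : ℝ) :
    cos ((x + 1) * θ) + cos ((x - 1) * θ) = 2 * cos θ * cos (x * θ) := by
  rw [add_one_mul, sub_one_mul, cos_add, cos_sub]
  ring

lemma oddCos_zero (t : ℝ) : oddCos t 0 = cos t := by
  simp [oddCos]

lemma oddCos_one (t : ℝ) : oddCos t 1 = cos t := by
  norm_num [oddCos]

lemma oddCos_add_two_add (t : ℝ) (j : ℕ) :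
    oddCos t (j + 2) + oddCos t j = 2 * cos (2 * t) * oddCos t (j + 1) := by
  convert cos_add_one_mul_add_cos_sub_one_mul (j + 1 / 2) (2 * t) using 3 <;>
    (unfold oddCos; congr 1; push_cast; ring)

lemma oddCos_add_oddCos_succ_add_two_mul_cos (t : ℝ) (n : ℕ) :
    oddCos t n + oddCos t (n + 1) + 2 * cos t = 4 * cos t * cos (n * t) ^ 2 := by
  have h_left : oddCos t n = cos (2 * (n * t) - t) := by
    unfold oddCos; congr 1; ring
  have h_right : oddCos t (n + 1) = cos (2 * (n * t) + t) := by
    unfold oddCos; congr 1; push_cast; ring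
  rw [h_left, h_right, cos_sub, cos_add, cos_two_mul]
  ring

lemma extremalNumerator_add_two_add (M θ : ℝ) (j : ℕ) :
    extremalNumerator M θ (j + 2) + extremalNumerator M θ j =
      2 * cos θ * extremalNumerator M θ (j + 1) + extremalDefect θ (j + 1) := by
  have h_sum_next := sin_add_one_mul_add_sin_sub_one_mul (j + 1) θ
  have h_sum_curr := sin_add_one_mul_add_sin_sub_one_mul j θ
  have h_diff_next := sin_add_one_mul_sub_sin_sub_one_mul (j + 1) θ
  have h_diff_curr := sin_add_one_mul_sub_sin_sub_one_mul j θ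
  have h_two : (j : ℝ) + 1 + 1 = j + 2 := by ring
  have h_one : (j : ℝ) + 2 - 1 = j + 1 := by ring
  simp only [extremalNumerator, extremalDefect, Nat.cast_add, Nat.cast_one, Nat.cast_ofNat,
    add_sub_cancel_right, h_two, h_one] at *
  linear_combination (M - j + 1) * h_sum_next - (M - j) * h_sum_curr - h_diff_next + h_diff_curr

lemma extremalDefect_add_two_add (θ : ℝ) (j : ℕ) :
    extremalDefect θ (j + 2) + extremalDefect θ j =
      2 * cos θ * extremalDefect θ (j + 1) := by
  have h_next := cos_add_one_mul_add_cos_sub_one_mul (j + 1) θ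
  have h_curr := cos_add_one_mul_add_cos_sub_one_mul j θ
  have h_two : (j : ℝ) + 1 + 1 = j + 2 := by ring
  have h_one : (j : ℝ) + 2 - 1 = j + 1 := by ring
  simp only [extremalDefect, Nat.cast_add, Nat.cast_one, Nat.cast_ofNat,
    add_sub_cancel_right, h_two, h_one] at *
  linear_combination 2 * sin θ * (h_curr - h_next)

section Boundary

lemma casoratian_extremalNumerator_oddCos_zero (M θ t : ℝ) :
    casoratian (extremalNumerator M θ) (oddCos t) 0 = 0 := by
  have h_zero : extremalNumerator M θ 0 = (M + 1) * sin θ := by simp [extremalNumerator]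
  have h_one : extremalNumerator M θ 1 = (M + 1) * sin θ := by
    simp only [extremalNumerator, Nat.cast_one, one_mul, sub_self, zero_mul, sin_zero]
    ring
  rw [casoratian, zero_add, oddCos_zero, oddCos_one, h_zero, h_one, sub_self]

lemma casoratian_extremalDefect_oddCos_zero (θ t : ℝ) :
    casoratian (extremalDefect θ) (oddCos t) 0 = -(4 * sin θ * (1 - cos θ) * cos t) := by
  have h_zero : extremalDefect θ 0 = 2 * sin θ * (cos θ - 1) := by simp [extremalDefect]
  have h_one : extremalDefect θ 1 = 2 * sin θ * (1 - cos θ) := by simp [extremalDefect]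
  rw [casoratian, zero_add, oddCos_zero, oddCos_one, h_zero, h_one]
  ring

variable {N : ℕ} {θ : ℝ}

lemma casoratian_extremalNumerator_oddCos (hθ : (N + 1) * θ = π) (t : ℝ) :
    casoratian (extremalNumerator N θ) (oddCos t) N =
      2 * sin θ * (1 - cos θ) * oddCos t (N + 1) := by
  have h_N : N * θ = π - θ := by linear_combination hθ
  have h_pred : (N - 1) * θ = π - 2 * θ := by linear_combination hθ
  simp only [casoratian, extremalNumerator, Nat.cast_add, Nat.cast_one, add_sub_cancel_right, hθ,
    h_N, h_pred, sin_pi, sin_pi_sub, sin_two_mul]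
  ring

lemma casoratian_extremalDefect_oddCos (hθ : (N + 1) * θ = π) (t : ℝ) :
    casoratian (extremalDefect θ) (oddCos t) N =
      2 * sin θ * (1 - cos θ) * ((1 + 2 * cos θ) * oddCos t (N + 1) - oddCos t N) := by
  have h_N : N * θ = π - θ := by linear_combination hθ
  have h_pred : (N - 1) * θ = π - 2 * θ := by linear_combination hθ
  simp only [casoratian, extremalDefect, Nat.cast_add, Nat.cast_one, add_sub_cancel_right, hθ,
    h_N, h_pred, cos_pi, cos_pi_sub, cos_two_mul]
  ring

lemma sq_mul_sum_extremalNumerator_mul_oddCos (hθ : (N + 1) * θ = π) (t : ℝ) :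
    (cos (2 * t) - cos θ) ^ 2 * ∑ j ∈ Icc 1 N, extremalNumerator N θ j * oddCos t j =
      2 * sin θ * (1 - cos θ) * (cos t * cos ((N + 1) * t) ^ 2) := by
  have h_parts := sub_sq_mul_sum_Icc_mul_eq_casoratian (extremalNumerator_add_two_add N θ)
    (extremalDefect_add_two_add θ) (oddCos_add_two_add t) N
  rw [casoratian_extremalNumerator_oddCos hθ, casoratian_extremalNumerator_oddCos_zero,
    casoratian_extremalDefect_oddCos hθ, casoratian_extremalDefect_oddCos_zero] at h_parts
  have h_cos := oddCos_add_oddCos_succ_add_two_mul_cos t (N + 1)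
  rw [Nat.cast_add_one] at h_cos
  linear_combination (1 / 4) * h_parts + (sin θ * (1 - cos θ) / 2) *
    (h_cos - oddCos_add_two_add t N)

end Boundary

theorem extremal_poly_re_formula (N : ℕ) (hN : 1 ≤ N) (a0 : ℕ → ℝ)
    (ha0 : ∀ j, a0 j =
      (((N : ℝ) - j + 2) * Real.sin (π * j / (N + 1)) -
        ((N : ℝ) - j + 1) * Real.sin (π * (j - 1) / (N + 1))) /
      ((N + 1) * Real.sin (π / (N + 1))))
    (t : ℝ) (ht : Real.cos (2 * t) ≠ Real.cos (π / (N + 1))) :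
    (∑ j ∈ Finset.Icc 1 N,
        (a0 j : ℂ) * Complex.exp (t * Complex.I) ^ (2 * j - 1)).re =
      4 * Real.sin (π / (2 * N + 2)) ^ 2 / (N + 1) *
        (Real.cos t * Real.cos ((N + 1) * t) ^ 2 /
          (Real.cos (2 * t) - Real.cos (π / (N + 1))) ^ 2) := by
  have h_half : 4 * sin (π / (2 * N + 2)) ^ 2 = 2 * (1 - cos (π / (N + 1))) := by
    rw [show π / ((N : ℝ) + 1) = 2 * (π / (2 * N + 2)) by field_simp, cos_two_mul, sin_sq]
    ring
  have h_coeff (j : ℕ) : a0 j =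
      extremalNumerator N (π / (N + 1)) j / ((N + 1) * sin (π / (N + 1))) := by
    simp only [ha0, extremalNumerator, mul_div_assoc', mul_comm π]
  have h_angle : (N + 1) * (π / (N + 1)) = π := by field_simp
  have h_sin : sin (π / (N + 1)) ≠ 0 := by
    refine (sin_pos_of_pos_of_lt_pi (by positivity) (div_lt_self pi_pos ?_)).ne'
    exact_mod_cast Nat.lt_add_of_pos_left hN
  have h_sub : cos (2 * t) - cos (π / (N + 1)) ≠ 0 := sub_ne_zero.mpr ht
  have h_sum := sq_mul_sum_extremalNumerator_mul_oddCos h_angle t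
  rw [re_sum_ofReal_mul_exp_pow_odd]
  simp only [h_coeff, div_mul_eq_mul_div, ← sum_div, h_half]
  field_simp
  linear_combination h_sum
end

section
/- Let N ≥ 1 and let F⁰(z) = ∑_{j=1}^{N} a⁰_j z^{2j−1} with a⁰_j = ((N−j+2)·sin(πj/(N+1)) − (N−j+1)·sin(π(j−1)/(N+1)))/((N+1)·sin(π/(N+1))). Then for every real t with cos(2t) ≠ cos(π/(N+1)), Im F⁰(e^{it}) = (sin((2N+2)t)·cos(t)·(1 − cos(π/(N+1))) − (N+1)·sin(t)·(cos(2t) − cos(π/(N+1)))) / ((N+1)·(cos(2t) − cos(π/(N+1)))²). -/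
open Real Finset

/-!
Put `n = N + 1`, `h = π / n`, `b j = sin (j h)` and `d j = (n - j) b j`. Up to the factor
`1 / (n sin h)`, the coefficient of index `j` is `b j + b (j - 1) + d j - d (j - 1)`. Since `b`
and `d` vanish at `0` and at `n`, summation by parts turns the sine sum into
`2 cos t ∑ b j sin (2 j t) - 2 sin t ∑ d j cos (2 j t)`.
Both sums are evaluated by Lagrange's identity for second differences: `b j` solves
`u (j + 1) + u (j - 1) = 2 c u j` with `c = cos h`, while `sin (2 j t)` and `cos (2 j t)` solve it
with `c = cos (2 t)`, and `d` solves the equation of `b` up to the source term `-2 sin h cos (j h)`.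
That source contributes `∑ cos (j h) cos (2 j t)`, to which Lagrange's identity applies once more.
-/

section SummationByParts

variable {R : Type*} [CommRing R]

theorem sum_range_lagrange_identity (u v : ℕ → R) (n : ℕ) :
    ∑ i ∈ range n, (u (i + 1) * (v (i + 2) + v i) - (u (i + 2) + u i) * v (i + 1)) =
      (u n * v (n + 1) - u (n + 1) * v n) - (u 0 * v 1 - u 1 * v 0) := by
  rw [← sum_range_sub fun i => u i * v (i + 1) - u (i + 1) * v i]
  exact sum_congr rfl fun i _ => by ring

theorem sum_range_add_add_sub_mul (b d s : ℕ → R) (n : ℕ) :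
    ∑ i ∈ range n, (b (i + 1) + b i + (d (i + 1) - d i)) * s (i + 1) =
      ∑ i ∈ range n, b (i + 1) * (s (i + 2) + s (i + 1)) -
        ∑ i ∈ range n, d (i + 1) * (s (i + 2) - s (i + 1)) +
        ((d n - b n) * s (n + 1) - (d 0 - b 0) * s 1) := by
  rw [← sum_range_sub fun i => (d i - b i) * s (i + 1), ← sum_sub_distrib, ← sum_add_distrib]
  exact sum_congr rfl fun i _ => by ring

end SummationByParts

section TrigonometricSums

theorem sin_add_two_mul_add_sin_mul (x h : ℝ) :
    sin ((x + 2) * h) + sin (x * h) = 2 * cos h * sin ((x + 1) * h) := by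
  rw [mul_right_comm, two_mul_sin_mul_cos]
  ring_nf

theorem cos_add_two_mul_add_cos_mul (x h : ℝ) :
    cos ((x + 2) * h) + cos (x * h) = 2 * cos h * cos ((x + 1) * h) := by
  rw [mul_right_comm, two_mul_cos_mul_cos]
  ring_nf

theorem two_mul_cos_sub_cos_mul_sum_sin_mul_sin (n : ℕ) (h θ : ℝ) :
    2 * (cos θ - cos h) * ∑ i ∈ range n, sin ((i + 1) * h) * sin ((i + 1) * θ) =
      sin (n * h) * sin ((n + 1) * θ) - sin ((n + 1) * h) * sin (n * θ) := by
  have lagrange := sum_range_lagrange_identity (fun j : ℕ => sin (j * h))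
    (fun j : ℕ => sin (j * θ)) n
  push_cast [sin_add_two_mul_add_sin_mul] at lagrange
  simp only [zero_mul, sin_zero, mul_zero, sub_zero] at lagrange
  rw [← lagrange, mul_sum]
  exact sum_congr rfl fun i _ => by ring

theorem two_mul_cos_sub_cos_mul_sum_cos_mul_cos (n : ℕ) (h θ : ℝ) :
    2 * (cos θ - cos h) * ∑ i ∈ range n, cos ((i + 1) * h) * cos ((i + 1) * θ) =
      cos (n * h) * cos ((n + 1) * θ) - cos ((n + 1) * h) * cos (n * θ) - (cos θ - cos h) := by
  have lagrange := sum_range_lagrange_identity (fun j : ℕ => cos (j * h))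
    (fun j : ℕ => cos (j * θ)) n
  push_cast [cos_add_two_mul_add_cos_mul] at lagrange
  simp only [zero_mul, cos_zero, one_mul, mul_one] at lagrange
  rw [← lagrange, mul_sum]
  exact sum_congr rfl fun i _ => by ring

theorem two_mul_cos_sub_cos_mul_sum_sub_mul_sin_mul_cos (n : ℕ) (h θ : ℝ) :
    2 * (cos θ - cos h) *
        ∑ i ∈ range n, (n - (i + 1)) * sin ((i + 1) * h) * cos ((i + 1) * θ) =
      sin ((n + 1) * h) * cos (n * θ) + (n - 1) * sin h -
        2 * sin h * ∑ i ∈ range n, cos ((i + 1) * h) * cos ((i + 1) * θ) := by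
  have source (x : ℝ) : (n - (x + 2)) * sin ((x + 2) * h) + (n - x) * sin (x * h) =
      2 * cos h * ((n - (x + 1)) * sin ((x + 1) * h)) - 2 * sin h * cos ((x + 1) * h) := by
    rw [show (x + 2) * h = (x + 1) * h + h by ring, show x * h = (x + 1) * h - h by ring,
      sin_add, sin_sub]
    ring
  have lagrange := sum_range_lagrange_identity (fun j : ℕ => (n - j) * sin (j * h))
    (fun j : ℕ => cos (j * θ)) n
  push_cast [cos_add_two_mul_add_cos_mul, source] at lagrange
  simp only [zero_mul, one_mul, sin_zero, cos_zero, mul_zero, mul_one, sub_self,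
    zero_sub] at lagrange
  rw [eq_sub_iff_add_eq, mul_sum, mul_sum, ← sum_add_distrib]
  trans -((n - (n + 1)) * sin ((n + 1) * h) * cos (n * θ)) - -((n - 1) * sin h)
  · rw [← lagrange]
    exact sum_congr rfl fun i _ => by ring
  · ring

variable {n : ℕ} {h : ℝ}

theorem sin_add_one_mul_of_mul_eq_pi (hnh : n * h = π) : sin ((n + 1) * h) = -sin h := by
  rw [add_one_mul, hnh, add_comm, sin_add_pi]

theorem cos_add_one_mul_of_mul_eq_pi (hnh : n * h = π) : cos ((n + 1) * h) = -cos h := by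
  rw [add_one_mul, hnh, add_comm, cos_add_pi]

theorem two_mul_cos_sub_cos_mul_sum_sin_mul_sin_of_mul_eq_pi (hnh : n * h = π) (θ : ℝ) :
    2 * (cos θ - cos h) * ∑ i ∈ range n, sin ((i + 1) * h) * sin ((i + 1) * θ) =
      sin h * sin (n * θ) := by
  rw [two_mul_cos_sub_cos_mul_sum_sin_mul_sin, sin_add_one_mul_of_mul_eq_pi hnh, hnh, sin_pi]
  ring

theorem two_mul_sq_cos_sub_cos_mul_sum_sub_mul_sin_mul_cos_of_mul_eq_pi (hnh : n * h = π) (θ : ℝ) :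
    2 * (cos θ - cos h) ^ 2 *
        ∑ i ∈ range n, (n - (i + 1)) * sin ((i + 1) * h) * cos ((i + 1) * θ) =
      sin h * (n * (cos θ - cos h) - sin θ * sin (n * θ)) := by
  have weighted := two_mul_cos_sub_cos_mul_sum_sub_mul_sin_mul_cos n h θ
  have unweighted := two_mul_cos_sub_cos_mul_sum_cos_mul_cos n h θ
  rw [sin_add_one_mul_of_mul_eq_pi hnh] at weighted
  rw [cos_add_one_mul_of_mul_eq_pi hnh, hnh, cos_pi, add_one_mul, cos_add] at unweighted
  linear_combination (cos θ - cos h) * weighted - sin h * unweighted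

theorem sum_sub_mul_sin_sub_mul_sin_of_sin_eq_zero (hnh : sin (n * h) = 0) (t : ℝ) :
    ∑ i ∈ range n, ((n - i) * sin ((i + 1) * h) - (n - (i + 1)) * sin (i * h)) *
        sin ((2 * i + 1) * t) =
      2 * cos t * ∑ i ∈ range n, sin ((i + 1) * h) * sin ((i + 1) * (2 * t)) -
        2 * sin t *
          ∑ i ∈ range n, (n - (i + 1)) * sin ((i + 1) * h) * cos ((i + 1) * (2 * t)) := by
  have parts := sum_range_add_add_sub_mul (fun j : ℕ => sin (j * h))
    (fun j : ℕ => (n - j) * sin (j * h)) (fun j : ℕ => sin ((2 * j - 1) * t)) n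
  have sum_sines (x : ℝ) : sin ((2 * (x + 2) - 1) * t) + sin ((2 * (x + 1) - 1) * t) =
      2 * cos t * sin ((x + 1) * (2 * t)) := by
    rw [mul_right_comm, two_mul_sin_mul_cos]
    ring_nf
  have sub_sines (x : ℝ) : sin ((2 * (x + 2) - 1) * t) - sin ((2 * (x + 1) - 1) * t) =
      2 * sin t * cos ((x + 1) * (2 * t)) := by
    rw [show (2 * (x + 2) - 1) * t = (x + 1) * (2 * t) + t by ring,
      show (2 * (x + 1) - 1) * t = (x + 1) * (2 * t) - t by ring, sin_add, sin_sub]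
    ring
  push_cast [sum_sines, sub_sines] at parts
  simp only [hnh, zero_mul, sin_zero, mul_zero, sub_self, add_zero] at parts
  rw [mul_sum, mul_sum]
  convert parts using 1
  · exact sum_congr rfl fun i _ => by ring_nf
  · congr 1 <;> exact sum_congr rfl fun i _ => by ring

theorem sq_cos_sub_cos_mul_sum_sub_mul_sin_sub_mul_sin_of_mul_eq_pi (hnh : n * h = π) (t : ℝ) :
    (cos (2 * t) - cos h) ^ 2 *
        ∑ i ∈ range n, ((n - i) * sin ((i + 1) * h) - (n - (i + 1)) * sin (i * h)) *
          sin ((2 * i + 1) * t) =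
      sin h * (sin (n * (2 * t)) * cos t * (1 - cos h) -
        n * sin t * (cos (2 * t) - cos h)) := by
  have unweighted := two_mul_cos_sub_cos_mul_sum_sin_mul_sin_of_mul_eq_pi hnh (2 * t)
  have weighted := two_mul_sq_cos_sub_cos_mul_sum_sub_mul_sin_mul_cos_of_mul_eq_pi hnh (2 * t)
  have cos_eq : cos t = cos (2 * t) * cos t + sin (2 * t) * sin t := by
    rw [← cos_sub, two_mul, add_sub_cancel_right]
  rw [sum_sub_mul_sin_sub_mul_sin_of_sin_eq_zero (hnh ▸ sin_pi)]
  linear_combination (cos (2 * t) - cos h) * cos t * unweighted - sin t * weighted -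
    sin h * sin (n * (2 * t)) * cos_eq

end TrigonometricSums

theorem im_sum_ofReal_mul_exp_mul_I_pow_odd (N : ℕ) (a : ℕ → ℝ) (t : ℝ) :
    (∑ j ∈ Icc 1 N, (a j : ℂ) * Complex.exp (t * Complex.I) ^ (2 * j - 1)).im =
      ∑ i ∈ range N, a (i + 1) * sin ((2 * i + 1) * t) := by
  have im_term (i : ℕ) :
      ((a (i + 1) : ℂ) * Complex.exp (t * Complex.I) ^ (2 * (i + 1) - 1)).im =
        a (i + 1) * sin ((2 * i + 1) * t) := by
    rw [show 2 * (i + 1) - 1 = 2 * i + 1 by lia, Complex.im_ofReal_mul, ← Complex.exp_nat_mul,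
      ← mul_assoc]
    exact_mod_cast congrArg (a (i + 1) * ·) (Complex.exp_ofReal_mul_I_im ((2 * i + 1) * t))
  rw [← Ico_add_one_right_eq_Icc, sum_Ico_eq_sum_range, add_tsub_cancel_right, Complex.im_sum]
  exact sum_congr rfl fun i _ => by rw [add_comm 1 i, im_term]

theorem extremal_poly_im_formula (N : ℕ) (hN : 1 ≤ N) (a0 : ℕ → ℝ)
    (ha0 : ∀ j, a0 j =
      (((N : ℝ) - j + 2) * Real.sin (π * j / (N + 1)) -
        ((N : ℝ) - j + 1) * Real.sin (π * (j - 1) / (N + 1))) /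
      ((N + 1) * Real.sin (π / (N + 1))))
    (t : ℝ) (ht : Real.cos (2 * t) ≠ Real.cos (π / (N + 1))) :
    (∑ j ∈ Finset.Icc 1 N,
        (a0 j : ℂ) * Complex.exp (t * Complex.I) ^ (2 * j - 1)).im =
      (Real.sin ((2 * N + 2) * t) * Real.cos t * (1 - Real.cos (π / (N + 1))) -
        (N + 1) * Real.sin t * (Real.cos (2 * t) - Real.cos (π / (N + 1)))) /
      ((N + 1) * (Real.cos (2 * t) - Real.cos (π / (N + 1))) ^ 2) := by
  set h : ℝ := π / (N + 1) with h_def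
  have hnh : ((N + 1 : ℕ) : ℝ) * h = π := by push_cast; rw [h_def]; field_simp
  have sin_ne : sin h ≠ 0 := by
    have one_lt : (1 : ℝ) < N + 1 := by exact_mod_cast Nat.lt_succ_of_le hN
    exact (sin_pos_of_pos_of_lt_pi (by positivity) (div_lt_self pi_pos one_lt)).ne'
  have coeff (i : ℕ) : a0 (i + 1) =
      (((N + 1 : ℕ) - i) * sin ((i + 1) * h) - ((N + 1 : ℕ) - (i + 1)) * sin (i * h)) /
        ((N + 1) * sin h) := by
    rw [ha0]; push_cast; rw [h_def]; ring_nf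
  have last_term : sin ((N + 1) * h) = 0 := by rw [← Nat.cast_add_one, hnh, sin_pi]
  have closed_form := sq_cos_sub_cos_mul_sum_sub_mul_sin_sub_mul_sin_of_mul_eq_pi hnh t
  rw [sum_range_succ, last_term] at closed_form
  rw [im_sum_ofReal_mul_exp_mul_I_pow_odd]
  simp only [coeff, div_mul_eq_mul_div, ← sum_div]
  rw [div_eq_div_iff (mul_ne_zero (by positivity) sin_ne)
      (mul_ne_zero (by positivity) (pow_ne_zero 2 (sub_ne_zero.mpr ht))),
    show (2 * N + 2) * t = (N + 1) * (2 * t) by ring]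
  push_cast at closed_form ⊢
  linear_combination (N + 1) * closed_form
end

section
/- Let N ≥ 2 and let v(t) = ∑_{j=1}^{N} a⁰_j·sin((2j−1)t) with a⁰_j = ((N−j+2)·sin(πj/(N+1)) − (N−j+1)·sin(π(j−1)/(N+1)))/((N+1)·sin(π/(N+1))). Then v is strictly decreasing on the interval (π/(N+1), π/2]: for all π/(N+1) < t₁ < t₂ ≤ π/2, v(t₁) > v(t₂). -/
open Real Finset

/-!
Summing the series with `θ = π / (N + 1)` and `κ = 1 - cos θ` gives, away from the zeros of
`E = 2 sin² t - κ = cos θ - cos 2t`, the closed form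
`v = sin t / E + κ cos t sin (2 (N + 1) t) / ((N + 1) E²)`, whose derivative is
`-(cos t E (E + 2κ (1 - cos (2 (N + 1) t))) + κ sin t (E + 8 cos² t) r) / E³`
with `r = sin (2 (N + 1) t) / (N + 1)`. On `(θ, π / 2)` we have `E > 0`, so only the last summand
can have the wrong sign. Near `π / 2` it is controlled by `|r| ≤ 2 cos t`, and farther away by
`|r| ≤ 1 / (N + 1) ≤ √(2κ) / 3`.
-/

lemma abs_sin_natCast_mul_le (n : ℕ) (x : ℝ) : |sin (n * x)| ≤ n * |sin x| := by
  induction n with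
  | zero => simp
  | succ n ih =>
    calc |sin ((n + 1 : ℕ) * x)|
        = |sin (n * x) * cos x + cos (n * x) * sin x| := by
          rw [← sin_add]; push_cast; ring_nf
      _ ≤ |sin (n * x)| * |cos x| + |cos (n * x)| * |sin x| := by
          simpa only [abs_mul] using abs_add_le (sin (n * x) * cos x) (cos (n * x) * sin x)
      _ ≤ n * |sin x| * 1 + 1 * |sin x| := by
          gcongr <;> exact abs_cos_le_one _
      _ = (n + 1 : ℕ) * |sin x| := by push_cast; ring

lemma three_div_pi_mul_le_sin {x : ℝ} (hx : 0 ≤ x) (hx' : x ≤ π / 6) : 3 / π * x ≤ sin x := by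
  have hle : 6 / π * x ≤ 1 := by
    rw [div_mul_eq_mul_div, div_le_one pi_pos]; linarith
  have hchord := strictConcaveOn_sin_Icc.concaveOn.2
    (Set.left_mem_Icc.2 pi_pos.le) (⟨by positivity, by linarith [pi_pos]⟩ : π / 6 ∈ Set.Icc 0 π)
    (sub_nonneg.2 hle) (by positivity) (sub_add_cancel _ _)
  have harg : 6 / π * x * (π / 6) = x := by field_simp
  simp only [smul_eq_mul, sin_zero, mul_zero, zero_add, sin_pi_div_six, harg] at hchord
  linarith [show 6 / π * x * (1 / 2) = 3 / π * x by ring]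

lemma mul_sq_le_one_sub_cos {x : ℝ} (hx : 0 ≤ x) (hx' : x ≤ π / 3) :
    9 / (2 * π ^ 2) * x ^ 2 ≤ 1 - cos x := by
  have hsin : 3 / π * (x / 2) ≤ sin (x / 2) := three_div_pi_mul_le_sin (by linarith) (by linarith)
  calc 9 / (2 * π ^ 2) * x ^ 2 = 2 * (3 / π * (x / 2)) ^ 2 := by ring
    _ ≤ 2 * sin (x / 2) ^ 2 := by gcongr
    _ = 1 - cos x := by rw [sin_sq_eq_half_sub, mul_div_cancel₀ x two_ne_zero]; ring

lemma one_sub_cos_add_mul_one_sub_cos_sub (x y : ℝ) :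
    (1 - cos (x + y)) * (1 - cos (x - y)) = (cos y - cos x) ^ 2 := by
  rw [cos_add, cos_sub]
  linear_combination (-sin y ^ 2) * sin_sq_add_cos_sq x - (1 - cos x ^ 2) * sin_sq_add_cos_sq y

lemma sum_sin_mul_sin_mul (n : ℕ) (x y : ℝ) :
    (∑ j ∈ range (n + 1), sin (j * x) * sin (j * y)) * (2 * (cos y - cos x)) =
      sin ((n + 1) * y) * sin (n * x) - sin (n * y) * sin ((n + 1) * x) := by
  induction n with
  | zero => simp
  | succ n ih =>
    rw [sum_range_succ, add_mul, ih]
    push_cast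
    have next (z : ℝ) : ((n : ℝ) + 1 + 1) * z = (n + 1) * z + z := by ring
    have prev (z : ℝ) : (n : ℝ) * z = (n + 1) * z - z := by ring
    simp only [next, prev, sin_add ((n + 1) * _), sin_sub]
    ring

lemma mul_sum_sin (n : ℕ) (x : ℝ) :
    2 * (1 - cos x) * ∑ j ∈ range (n + 1), sin (j * x) =
      sin x + sin (n * x) - sin ((n + 1) * x) := by
  induction n with
  | zero => simp
  | succ n ih =>
    rw [sum_range_succ, mul_add, ih]
    push_cast
    have next : ((n : ℝ) + 1 + 1) * x = (n + 1) * x + x := by ring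
    have prev : (n : ℝ) * x = (n + 1) * x - x := by ring
    rw [next, prev, sin_add ((n + 1) * x), sin_sub]
    ring

lemma mul_sum_sub_mul_sin (m : ℕ) (x : ℝ) :
    2 * (1 - cos x) * ∑ j ∈ range m, ((m : ℝ) - j) * sin (j * x) = m * sin x - sin (m * x) := by
  induction m with
  | zero => simp
  | succ n ih =>
    have hsum : ∑ j ∈ range (n + 1), (((n + 1 : ℕ) : ℝ) - j) * sin (j * x) =
        ∑ j ∈ range n, ((n : ℝ) - j) * sin (j * x) + ∑ j ∈ range (n + 1), sin (j * x) := by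
      rw [sum_range_succ, sum_range_succ (fun j : ℕ => sin (j * x)), ← add_assoc,
        ← sum_add_distrib]
      refine congrArg₂ (· + ·) (sum_congr rfl fun j _ => ?_) ?_ <;> push_cast <;> ring
    rw [hsum, mul_add, ih, mul_sum_sin]
    push_cast
    ring

lemma sum_sin_mul_sin_of_mul_eq_pi {n : ℕ} {θ : ℝ} (hθ : (n + 1) * θ = π) (x : ℝ) :
    2 * (cos θ - cos x) * ∑ j ∈ range (n + 1), sin (j * θ) * sin (j * x) =
      -(sin θ * sin ((n + 1) * x)) := by
  have hsin : sin (n * θ) = sin θ := by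
    rw [← sin_pi_sub, ← hθ]; ring_nf
  have hsum := sum_sin_mul_sin_mul n θ x
  rw [hθ, sin_pi, hsin] at hsum
  linear_combination -hsum

lemma sum_sub_mul_sin_add_sub_of_mul_eq_pi {m : ℕ} {θ : ℝ} (hθ : m * θ = π) (x : ℝ) :
    (cos θ - cos x) ^ 2 * (∑ j ∈ range m, ((m : ℝ) - j) * sin (j * (x + θ)) -
        ∑ j ∈ range m, ((m : ℝ) - j) * sin (j * (x - θ))) =
      -(sin θ * (m * (cos θ - cos x) + sin x * sin (m * x))) := by
  have hadd := mul_sum_sub_mul_sin m (x + θ)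
  have hsub := mul_sum_sub_mul_sin m (x - θ)
  rw [mul_add (m : ℝ), hθ, sin_add_pi] at hadd
  rw [mul_sub (m : ℝ), hθ, sin_sub_pi] at hsub
  rw [← one_sub_cos_add_mul_one_sub_cos_sub x θ]
  have hcross : (1 - cos (x - θ)) * (m * sin (x + θ) + sin (m * x)) -
      (1 - cos (x + θ)) * (m * sin (x - θ) + sin (m * x)) =
        -(2 * (sin θ * (m * (cos θ - cos x) + sin x * sin (m * x)))) := by
    rw [sin_add, sin_sub, cos_add, cos_sub]
    linear_combination (-(2 * m * sin θ * cos θ)) * sin_sq_add_cos_sq x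
  linear_combination (1 - cos (x - θ)) / 2 * hadd - (1 - cos (x + θ)) / 2 * hsub + hcross / 2

lemma sum_sub_mul_sub_mul_shift {R : Type*} [CommRing R] (n : ℕ) (u s : ℕ → R) (hu : u 0 = 0) :
    ∑ j ∈ range n, ((n + 1 - j) * u (j + 1) - (n - j) * u j) * s (j + 1) =
      ∑ j ∈ range (n + 1), u j * ((n + 1 - j) * (s j - s (j + 1)) + (s j + s (j + 1))) := by
  have hfirst : ∑ j ∈ range n, (n + 1 - j) * u (j + 1) * s (j + 1) =
      ∑ j ∈ range (n + 1), (n + 2 - j) * u j * s j := by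
    rw [sum_range_succ', hu]
    push_cast
    ring_nf
  have hsecond : ∑ j ∈ range n, (n - j) * u j * s (j + 1) =
      ∑ j ∈ range (n + 1), (n - j) * u j * s (j + 1) := by
    rw [sum_range_succ, sub_self, zero_mul, zero_mul, add_zero]
  simp only [sub_mul _ _ (s _), sum_sub_distrib]
  rw [hfirst, hsecond, ← sum_sub_distrib]
  exact sum_congr rfl fun j _ => by ring

/-- The imaginary part `v t = Im F⁰(exp (i t))` of the boundary values of the extremal
polynomial. -/
noncomputable def extremalIm (N : ℕ) (t : ℝ) : ℝ :=
  ∑ j ∈ Icc 1 N, extremalCoeff N j * sin ((2 * (j : ℝ) - 1) * t)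

/-- The closed form of `extremalIm N`, for `m = N + 1` and `κ = 1 - cos (π / (N + 1))`. It has
junk values where `2 sin² t = κ`. -/
noncomputable def extremalImClosedForm (m κ t : ℝ) : ℝ :=
  sin t / (2 * sin t ^ 2 - κ) + κ * cos t * sin (2 * m * t) / (m * (2 * sin t ^ 2 - κ) ^ 2)

lemma continuous_extremalIm (N : ℕ) : Continuous (extremalIm N) := by
  unfold extremalIm
  fun_prop

lemma sin_pi_div_natCast_add_one_pos {N : ℕ} (hN : N ≠ 0) : 0 < sin (π / ((N : ℝ) + 1)) := by
  refine sin_pos_of_pos_of_lt_pi (by positivity) (div_lt_self pi_pos ?_)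
  exact_mod_cast Nat.lt_add_of_pos_left (Nat.pos_of_ne_zero hN)

lemma mul_extremalIm_eq_sum_shift {N : ℕ} (hN : N ≠ 0) (t : ℝ) :
    (N + 1) * sin (π / (N + 1)) * extremalIm N t =
      ∑ j ∈ range (N + 1), sin (j * (π / (N + 1))) *
        ((N + 1 - j) * (sin (j * (2 * t) - t) - sin (j * (2 * t) + t)) +
          (sin (j * (2 * t) - t) + sin (j * (2 * t) + t))) := by
  have hsin := sin_pi_div_natCast_add_one_pos hN
  have hshift := sum_sub_mul_sub_mul_shift N (fun j => sin (j * (π / ((N : ℝ) + 1))))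
    (fun j => sin (j * (2 * t) - t)) (by simp)
  have hnext (j : ℕ) : ((j + 1 : ℕ) : ℝ) * (2 * t) - t = j * (2 * t) + t := by push_cast; ring
  simp only [hnext] at hshift
  rw [← hshift, extremalIm, mul_sum, ← Ico_add_one_right_eq_Icc, sum_Ico_eq_sum_range,
    Nat.add_sub_cancel]
  refine sum_congr rfl fun j _ => ?_
  have hodd : (2 * ((1 + j : ℕ) : ℝ) - 1) * t = j * (2 * t) + t := by push_cast; ring
  have hcurr : π * ((1 + j : ℕ) : ℝ) / (N + 1) = ((j + 1 : ℕ) : ℝ) * (π / (N + 1)) := by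
    push_cast; ring
  have hprev : π * (((1 + j : ℕ) : ℝ) - 1) / (N + 1) = j * (π / (N + 1)) := by
    push_cast; ring
  rw [extremalCoeff, hodd, hcurr, hprev]
  field_simp
  push_cast
  ring

lemma mul_extremalIm_eq_sums {N : ℕ} (hN : N ≠ 0) (t : ℝ) :
    (N + 1) * sin (π / (N + 1)) * extremalIm N t =
      2 * cos t * ∑ j ∈ range (N + 1), sin (j * (π / (N + 1))) * sin (j * (2 * t)) -
        sin t *
          (∑ j ∈ range (N + 1), (((N + 1 : ℕ) : ℝ) - j) * sin (j * (2 * t + π / (N + 1))) -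
            ∑ j ∈ range (N + 1), (((N + 1 : ℕ) : ℝ) - j) * sin (j * (2 * t - π / (N + 1)))) := by
  rw [mul_extremalIm_eq_sum_shift hN, ← sum_sub_distrib, mul_sum, mul_sum, ← sum_sub_distrib]
  refine sum_congr rfl fun j _ => ?_
  simp only [mul_add (j : ℝ), mul_sub (j : ℝ), sin_add, sin_sub]
  push_cast
  ring

lemma extremalIm_eq_closedForm {N : ℕ} (hN : N ≠ 0) {t : ℝ}
    (ht : 2 * sin t ^ 2 - (1 - cos (π / (N + 1))) ≠ 0) :
    extremalIm N t = extremalImClosedForm (N + 1) (1 - cos (π / (N + 1))) t := by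
  have hsin := sin_pi_div_natCast_add_one_pos hN
  have hsum := mul_extremalIm_eq_sums hN t
  have hθ : ((N : ℝ) + 1) * (π / (N + 1)) = π := by field_simp
  have hD := sum_sin_mul_sin_of_mul_eq_pi hθ (2 * t)
  have hA := sum_sub_mul_sin_add_sub_of_mul_eq_pi (m := N + 1) (by exact_mod_cast hθ) (2 * t)
  set θ := π / ((N : ℝ) + 1)
  have hE : cos θ - cos (2 * t) = 2 * sin t ^ 2 - (1 - cos θ) := by
    rw [cos_two_mul, cos_sq']; ring
  have hangle : ((N : ℝ) + 1) * (2 * t) = 2 * (N + 1) * t := by ring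
  push_cast at hA hsum
  rw [hE, hangle] at hD hA
  rw [sin_two_mul] at hA
  set E := 2 * sin t ^ 2 - (1 - cos θ) with hE'
  have hmul : E ^ 2 * (N + 1) * extremalIm N t =
      (N + 1) * E * sin t + (1 - cos θ) * cos t * sin (2 * (N + 1) * t) := by
    apply mul_left_cancel₀ hsin.ne'
    linear_combination E ^ 2 * hsum + E * cos t * hD - sin t * hA
      - sin θ * cos t * sin (2 * (N + 1) * t) * hE'
  rw [extremalImClosedForm, ← hE']
  field_simp
  linear_combination hmul

lemma hasDerivAt_extremalImClosedForm {m κ t : ℝ} (hm : m ≠ 0) (ht : 2 * sin t ^ 2 - κ ≠ 0) :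
    HasDerivAt (extremalImClosedForm m κ)
      (-(cos t * (2 * sin t ^ 2 - κ) * (2 * sin t ^ 2 - κ + 2 * κ * (1 - cos (2 * m * t))) +
        κ * sin t * (2 * sin t ^ 2 - κ + 8 * cos t ^ 2) * (sin (2 * m * t) / m)) /
          (2 * sin t ^ 2 - κ) ^ 3) t := by
  have hE : HasDerivAt (fun t => 2 * sin t ^ 2 - κ) (2 * (2 * sin t * cos t)) t := by
    simpa using (((hasDerivAt_sin t).pow 2).const_mul 2).sub_const κ
  have hW : HasDerivAt (fun t => sin (2 * m * t)) (cos (2 * m * t) * (2 * m)) t := by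
    simpa using ((hasDerivAt_id t).const_mul (2 * m)).sin
  have hfirst := (hasDerivAt_sin t).fun_div hE ht
  have hsecond := (((hasDerivAt_cos t).const_mul κ).fun_mul hW).fun_div
    ((hE.fun_pow 2).const_mul m) (mul_ne_zero hm (pow_ne_zero 2 ht))
  refine (hfirst.fun_add hsecond).congr_deriv ?_
  have hsq : 2 * sin t ^ 2 = (2 * sin t ^ 2 - κ) + κ := by ring
  generalize 2 * sin t ^ 2 - κ = E at *
  push_cast
  field_simp
  linear_combination (-2 * cos t * E * m) * hsq

-- The left side increases with `κ` and the right side decreases, so only the endpoint `K` matters.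
lemma mul_mul_lt_mul_sq_of_le {κ K c z p : ℝ} (hκ : 0 < κ) (hκK : κ ≤ K) (hK : K ≤ 1)
    (hKc : K ≤ 2 * (1 - c ^ 2)) (hc : 0 ≤ c) (hp : 0 ≤ p) (hz : z < p)
    (h : p * (K * (2 - K + 6 * c ^ 2)) ≤ c * (2 * (1 - c ^ 2) - K) ^ 2) :
    z * (κ * (2 - κ + 6 * c ^ 2)) < c * (2 * (1 - c ^ 2) - κ) ^ 2 := by
  have hfactor : 0 < 2 - κ + 6 * c ^ 2 := by nlinarith
  have hmono : κ * (2 - κ + 6 * c ^ 2) ≤ K * (2 - K + 6 * c ^ 2) := by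
    nlinarith [mul_nonneg (sub_nonneg.2 hκK) (by nlinarith : 0 ≤ 2 + 6 * c ^ 2 - K - κ)]
  calc z * (κ * (2 - κ + 6 * c ^ 2))
      < p * (κ * (2 - κ + 6 * c ^ 2)) := by gcongr
    _ ≤ p * (K * (2 - K + 6 * c ^ 2)) := by gcongr
    _ ≤ c * (2 * (1 - c ^ 2) - K) ^ 2 := h
    _ ≤ c * (2 * (1 - c ^ 2) - κ) ^ 2 := by
      have : 0 ≤ 2 * (1 - c ^ 2) - K := sub_nonneg.2 hKc
      gcongr

lemma mul_mul_lt_mul_sq_of_le_half {κ s c y : ℝ} (hκ : 0 < κ) (hκ' : κ ≤ 1 / 2) (hs : 0 ≤ s)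
    (hc : 0 < c) (hc' : c ≤ 1 / 2) (hsc : s ^ 2 + c ^ 2 = 1) (hyκ : y ^ 2 ≤ 2 * κ / 9)
    (hyc : y ≤ 2 * c) :
    s * y * (κ * (2 - κ + 6 * c ^ 2)) < c * (2 * (1 - c ^ 2) - κ) ^ 2 := by
  have hs1 : s < 1 := by nlinarith
  have hy : y ≤ 1 / 3 := by nlinarith
  -- the convex combination of `2 * c` and `1 / 3` with weights `1 - 2 * c` and `2 * c`
  have hyp : y ≤ c * (8 / 3 - 4 * c) := by nlinarith
  have hp : 0 < c * (8 / 3 - 4 * c) := mul_pos hc (by linarith)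
  have hz : s * y < c * (8 / 3 - 4 * c) :=
    (mul_le_mul_of_nonneg_left hyp hs).trans_lt (mul_lt_of_lt_one_left hp hs1)
  refine mul_mul_lt_mul_sq_of_le hκ hκ' (by norm_num) (by nlinarith) hc.le hp.le hz ?_
  have hgap : 0 ≤ 4 * c * (1 / 2 - c) ^ 2 * (c ^ 2 + 4 * c + 1 / 4) := by positivity
  linear_combination hgap

lemma mul_mul_lt_mul_sq_of_half_le {κ s c y : ℝ} (hκ : 0 < κ) (hc : 1 / 2 ≤ c)
    (hcκ : c ≤ 1 - κ) (hsc : s ^ 2 + c ^ 2 = 1) (hyκ : y ^ 2 ≤ 2 * κ / 9) :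
    s * y * (κ * (2 - κ + 6 * c ^ 2)) < c * (2 * (1 - c ^ 2) - κ) ^ 2 := by
  have hc1 : 0 < 1 - c := by linarith
  have hz : s * y < 2 / 3 * (1 - c) := by
    refine lt_of_pow_lt_pow_left₀ 2 (by linarith) ?_
    calc (s * y) ^ 2 = (1 - c ^ 2) * y ^ 2 := by rw [mul_pow, ← hsc]; ring
      _ ≤ (1 - c ^ 2) * (2 * (1 - c) / 9) := by
        gcongr
        · nlinarith
        · linarith
      _ = 2 / 9 * (1 - c) ^ 2 * (1 + c) := by ring
      _ < 2 / 9 * (1 - c) ^ 2 * 2 := by gcongr; linarith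
      _ = (2 / 3 * (1 - c)) ^ 2 := by ring
  refine mul_mul_lt_mul_sq_of_le hκ (by linarith : κ ≤ 1 - c) (by linarith) (by nlinarith)
    (by linarith) (by linarith) hz ?_
  have hcube : (1 / 2) ^ 3 ≤ c ^ 3 := by gcongr
  have hgap : 0 ≤ (1 - c) ^ 2 * (c + 12 * c ^ 3 - 2) / 3 := by
    have : 0 ≤ c + 12 * c ^ 3 - 2 := by linarith
    positivity
  linear_combination hgap

lemma extremalImClosedForm_deriv_numerator_pos {κ s c X r : ℝ} (hκ : 0 < κ) (hκ' : κ ≤ 1 / 2)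
    (hs : 0 ≤ s) (hc : 0 < c) (hsc : s ^ 2 + c ^ 2 = 1) (hcκ : c ≤ 1 - κ)
    (hX : X ≤ 1) (hrκ : r ^ 2 ≤ 2 * κ / 9) (hrc : |r| ≤ 2 * c) :
    0 < c * (2 * s ^ 2 - κ) * (2 * s ^ 2 - κ + 2 * κ * (1 - X)) +
      κ * s * (2 * s ^ 2 - κ + 8 * c ^ 2) * r := by
  have hneg_r : (-r) ^ 2 ≤ 2 * κ / 9 := by rwa [neg_sq]
  have hmain : s * -r * (κ * (2 - κ + 6 * c ^ 2)) < c * (2 * (1 - c ^ 2) - κ) ^ 2 := by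
    rcases le_total c (1 / 2) with hc2 | hc2
    · exact mul_mul_lt_mul_sq_of_le_half hκ hκ' hs hc hc2 hsc hneg_r ((neg_le_abs r).trans hrc)
    · exact mul_mul_lt_mul_sq_of_half_le hκ hc2 hcκ hsc hneg_r
  have hdrop : 0 ≤ c * (2 * s ^ 2 - κ) * (2 * κ * (1 - X)) := by
    have hE : 0 ≤ 2 * s ^ 2 - κ := by nlinarith
    have : 0 ≤ 1 - X := sub_nonneg.2 hX
    positivity
  rw [show s ^ 2 = 1 - c ^ 2 by linarith] at hdrop ⊢
  linear_combination hmain + hdrop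

lemma abs_sin_two_mul_natCast_mul_div_le {m : ℕ} (hm : 0 < m) {t : ℝ} (ht : 0 ≤ cos t) :
    |sin (2 * m * t) / m| ≤ 2 * cos t := by
  have hm' : (0 : ℝ) < m := by exact_mod_cast hm
  rw [abs_div, Nat.abs_cast, div_le_iff₀ hm']
  calc |sin (2 * m * t)| = |sin (m * (2 * t))| := by ring_nf
    _ ≤ m * |sin (2 * t)| := abs_sin_natCast_mul_le m _
    _ = m * (2 * |sin t| * cos t) := by
      rw [sin_two_mul, abs_mul, abs_mul, abs_two, abs_of_nonneg ht]
    _ ≤ m * (2 * 1 * cos t) := by gcongr; exact abs_sin_le_one t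
    _ = 2 * cos t * m := by ring

lemma sin_div_sq_le_one_sub_cos_pi_div {m : ℝ} (hm : 3 ≤ m) (x : ℝ) :
    (sin x / m) ^ 2 ≤ 2 * (1 - cos (π / m)) / 9 := by
  have hcos := mul_sq_le_one_sub_cos (x := π / m) (by positivity) (by gcongr)
  calc (sin x / m) ^ 2 = sin x ^ 2 / m ^ 2 := div_pow _ _ _
    _ ≤ 1 / m ^ 2 := by gcongr; exact sin_sq_le_one x
    _ = 2 * (9 / (2 * π ^ 2) * (π / m) ^ 2) / 9 := by field_simp
    _ ≤ 2 * (1 - cos (π / m)) / 9 := by gcongr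

lemma one_sub_cos_lt_two_mul_sin_sq {θ t : ℝ} (hθ : 0 ≤ θ) (ht : t ∈ Set.Ioo θ (π / 2)) :
    1 - cos θ < 2 * sin t ^ 2 := by
  have hcos : cos (2 * t) < cos θ :=
    cos_lt_cos_of_nonneg_of_le_pi hθ (by linarith [ht.2]) (by linarith [ht.1])
  rw [cos_two_mul, cos_sq'] at hcos
  linarith

lemma deriv_extremalIm_neg {N : ℕ} (hN : 2 ≤ N) {t : ℝ}
    (ht : t ∈ Set.Ioo (π / (N + 1)) (π / 2)) : deriv (extremalIm N) t < 0 := by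
  have hm : (3 : ℝ) ≤ N + 1 := by exact_mod_cast Nat.succ_le_succ hN
  have hr := sin_div_sq_le_one_sub_cos_pi_div hm (2 * (N + 1) * t)
  have hform (x : ℝ) (hx : x ∈ Set.Ioo (π / (N + 1)) (π / 2)) := extremalIm_eq_closedForm
    (by lia : N ≠ 0) (sub_pos.2 (one_sub_cos_lt_two_mul_sin_sq (by positivity) hx)).ne'
  have hθ0 : 0 < π / (N + 1) := by positivity
  have hθ3 : π / (N + 1) ≤ π / 3 := by gcongr
  set θ := π / ((N : ℝ) + 1)
  have hE : 0 < 2 * sin t ^ 2 - (1 - cos θ) :=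
    sub_pos.2 (one_sub_cos_lt_two_mul_sin_sq hθ0.le ht)
  have hderiv := (hasDerivAt_extremalImClosedForm (by linarith : (N : ℝ) + 1 ≠ 0) hE.ne')
    |>.congr_of_eventuallyEq (Filter.eventually_of_mem (Ioo_mem_nhds ht.1 ht.2) hform)
  have hcosθ : 1 / 2 ≤ cos θ := by
    rw [← cos_pi_div_three]
    exact cos_le_cos_of_nonneg_of_le_pi hθ0.le (by linarith [pi_pos]) hθ3
  have hcosθ' : cos θ < 1 := by
    rw [← cos_zero]
    exact cos_lt_cos_of_nonneg_of_le_pi le_rfl (by linarith [pi_pos]) hθ0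
  have hsin : 0 < sin t := sin_pos_of_pos_of_lt_pi (hθ0.trans ht.1) (by linarith [ht.2, pi_pos])
  have hcos : 0 < cos t := cos_pos_of_mem_Ioo ⟨by linarith [ht.1, pi_pos], ht.2⟩
  have hcos_le : cos t ≤ cos θ :=
    cos_le_cos_of_nonneg_of_le_pi hθ0.le (by linarith [ht.2, pi_pos]) ht.1.le
  have hr' := abs_sin_two_mul_natCast_mul_div_le N.succ_pos hcos.le
  push_cast at hr'
  rw [hderiv.deriv]
  refine div_neg_of_neg_of_pos (neg_lt_zero.2 ?_) (by positivity)
  exact extremalImClosedForm_deriv_numerator_pos (by linarith) (by linarith) hsin.le hcos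
    (sin_sq_add_cos_sq t) (by linarith) (cos_le_one _) hr hr'

theorem strictAntiOn_extremalIm {N : ℕ} (hN : 2 ≤ N) :
    StrictAntiOn (extremalIm N) (Set.Icc (π / (N + 1)) (π / 2)) := by
  refine strictAntiOn_of_deriv_neg (convex_Icc _ _) (continuous_extremalIm N).continuousOn ?_
  rw [interior_Icc]
  exact fun t ht => deriv_extremalIm_neg hN ht

theorem extremal_im_decreasing (N : ℕ) (hN : 2 ≤ N) (a0 : ℕ → ℝ)
    (ha0 : ∀ j, a0 j =
      (((N : ℝ) - j + 2) * Real.sin (π * j / (N + 1)) -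
        ((N : ℝ) - j + 1) * Real.sin (π * (j - 1) / (N + 1))) /
      ((N + 1) * Real.sin (π / (N + 1))))
    (v : ℝ → ℝ)
    (hv : ∀ t, v t = ∑ j ∈ Finset.Icc 1 N, a0 j * Real.sin ((2 * (j : ℝ) - 1) * t)) :
    ∀ t₁ t₂ : ℝ, π / (N + 1) < t₁ → t₁ < t₂ → t₂ ≤ π / 2 → v t₁ > v t₂ := by
  intro t₁ t₂ h₁ h₁₂ h₂
  obtain rfl : a0 = extremalCoeff N := funext ha0
  obtain rfl : v = extremalIm N := funext hv
  exact strictAntiOn_extremalIm hN ⟨h₁.le, h₁₂.le.trans h₂⟩ ⟨(h₁.trans h₁₂).le, h₂⟩ h₁₂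
end

section
/- Let N ≥ 2 and let v(t) = ∑_{j=1}^{N} a⁰_j·sin((2j−1)t) with a⁰_j = ((N−j+2)·sin(πj/(N+1)) − (N−j+1)·sin(π(j−1)/(N+1)))/((N+1)·sin(π/(N+1))). Then for every real t with sin²(t) ≠ sin²(π/(2N+2)), v(t) = (sin(t)/(sin²(t) − sin²(π/(2N+2)))) · (1/2 − cos²(t)·∏_{k=2}^{N} (1 − sin²(t)/sin²(kπ/(2N+2)))). -/
open Real Finset

/-!
Put `θ = π / (N + 1)` and `D = sin² t - sin² (θ / 2) = (cos θ - cos 2t) / 2`. Summation by parts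
turns `v` into a combination of `A = ∑ sin jθ sin 2jt` and the Fejér-type sum
`B = ∑ (N + 1 - j) sin jθ cos 2jt`. Both factors of each summand solve a recurrence
`x (n + 2) = c * x (n + 1) - x n`, with `c = 2 cos θ` and `c = 2 cos 2t` respectively, so
multiplying by the difference `4 D` of these constants makes such a sum telescope to a Casoratian
(the Christoffel–Darboux argument). One application evaluates `A`; applied to the partial sums of
`∑ sin jθ cos 2jt`, which add up to `B`, it reduces `B` to `A`. The outcome is
`v t = sin t / (2 D) + sin² (θ / 2) cos t sin ((2 N + 2) t) / (2 (N + 1) D²)`,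
and it remains to factor `sin ((2 N + 2) t)` by the roots of the Chebyshev polynomial `U_N`.
-/

@[to_additive sum_Icc_one_eq_sum_range]
theorem prod_Icc_one_eq_prod_range {M : Type*} [CommMonoid M] (f : ℕ → M) (n : ℕ) :
    ∏ k ∈ Icc 1 n, f k = ∏ k ∈ range n, f (k + 1) := by
  rw [← Ico_add_one_right_eq_Icc, range_eq_Ico, prod_Ico_add']

section Recurrence

variable {R : Type*} [CommRing R]

theorem sub_mul_sum_mul_eq_casoratian_sub {a b : R} {f g : ℕ → R}
    (hf : ∀ n, f (n + 2) = a * f (n + 1) - f n) (hg : ∀ n, g (n + 2) = b * g (n + 1) - g n)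
    (n : ℕ) :
    (a - b) * ∑ j ∈ range n, f (j + 1) * g (j + 1) =
      (f (n + 1) * g n - f n * g (n + 1)) - (f 1 * g 0 - f 0 * g 1) := by
  induction n with
  | zero => simp
  | succ n ih =>
    rw [sum_range_succ, mul_add, ih, hf, hg]
    ring

theorem sum_range_succ_sub_mul (h : ℕ → R) (n : ℕ) :
    ∑ j ∈ range (n + 1), (((n + 1 : ℕ) : R) - j) * h j =
      ∑ j ∈ range n, ((n : R) - j) * h j + ∑ j ∈ range (n + 1), h j := by
  have extended : ∑ j ∈ range n, ((n : R) - j) * h j =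
      ∑ j ∈ range (n + 1), ((n : R) - j) * h j := by
    rw [sum_range_succ, sub_self, zero_mul, add_zero]
  rw [extended, ← sum_add_distrib]
  refine sum_congr rfl fun j _ ↦ ?_
  push_cast
  ring

end Recurrence

theorem sin_natCast_add_two_mul (θ : ℝ) (n : ℕ) :
    sin ((n + 2 : ℕ) * θ) = 2 * cos θ * sin ((n + 1 : ℕ) * θ) - sin (n * θ) := by
  have product_to_sum := two_mul_sin_mul_cos ((n + 1 : ℕ) * θ) θ
  rw [show (n + 1 : ℕ) * θ - θ = n * θ by push_cast; ring,
    show (n + 1 : ℕ) * θ + θ = (n + 2 : ℕ) * θ by push_cast; ring] at product_to_sum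
  linear_combination -product_to_sum

theorem cos_natCast_add_two_mul (θ : ℝ) (n : ℕ) :
    cos ((n + 2 : ℕ) * θ) = 2 * cos θ * cos ((n + 1 : ℕ) * θ) - cos (n * θ) := by
  have product_to_sum := two_mul_cos_mul_cos ((n + 1 : ℕ) * θ) θ
  rw [show (n + 1 : ℕ) * θ - θ = n * θ by push_cast; ring,
    show (n + 1 : ℕ) * θ + θ = (n + 2 : ℕ) * θ by push_cast; ring] at product_to_sum
  linear_combination -product_to_sum

theorem cos_sub_cos_mul_sum_sin_mul_sin (θ τ : ℝ) (n : ℕ) :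
    2 * (cos θ - cos τ) * ∑ j ∈ range (n + 1), sin (j * θ) * sin (j * τ) =
      sin ((n + 1 : ℕ) * θ) * sin (n * τ) - sin (n * θ) * sin ((n + 1 : ℕ) * τ) := by
  have telescoped := sub_mul_sum_mul_eq_casoratian_sub
    (f := fun j ↦ sin (j * θ)) (g := fun j ↦ sin (j * τ)) (sin_natCast_add_two_mul θ)
    (sin_natCast_add_two_mul τ) n
  rw [sum_range_succ', mul_sub, mul_add, telescoped]
  simp

theorem cos_sub_cos_mul_sum_sin_mul_cos (θ τ : ℝ) (n : ℕ) :
    2 * (cos θ - cos τ) * ∑ j ∈ range (n + 1), sin (j * θ) * cos (j * τ) =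
      sin ((n + 1 : ℕ) * θ) * cos (n * τ) - sin (n * θ) * cos ((n + 1 : ℕ) * τ) - sin θ := by
  have telescoped := sub_mul_sum_mul_eq_casoratian_sub
    (f := fun j ↦ sin (j * θ)) (g := fun j ↦ cos (j * τ)) (sin_natCast_add_two_mul θ)
    (cos_natCast_add_two_mul τ) n
  rw [sum_range_succ', mul_sub, mul_add, telescoped]
  simp

theorem cos_sub_cos_mul_fejer_sum (θ τ : ℝ) (n : ℕ) :
    2 * (cos θ - cos τ) * ∑ j ∈ range n, ((n : ℝ) - j) * (sin (j * θ) * cos (j * τ)) =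
      2 * sin τ * ∑ j ∈ range n, sin (j * θ) * sin (j * τ) +
        sin (n * θ) * cos ((n - 1) * τ) - n * sin θ := by
  induction n with
  | zero => simp
  | succ n ih =>
    have cos_diff : cos ((n - 1) * τ) - cos ((n + 1 : ℕ) * τ) = 2 * sin τ * sin (n * τ) := by
      rw [mul_right_comm, two_mul_sin_mul_sin]
      push_cast
      ring_nf
    rw [sum_range_succ_sub_mul, mul_add, ih, cos_sub_cos_mul_sum_sin_mul_cos,
      sum_range_succ (fun j : ℕ ↦ sin (j * θ) * sin (j * τ))]
    push_cast at cos_diff ⊢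
    rw [add_sub_cancel_right]
    linear_combination sin (n * θ) * cos_diff

theorem sum_weighted_diff_mul_sin_odd {s : ℕ → ℝ} (hs : s 0 = 0) (N : ℕ) (t : ℝ) :
    ∑ j ∈ range N, ((N + 1 - j) * s (j + 1) - (N - j) * s j) * sin ((2 * j + 1) * t) =
      2 * cos t * ∑ j ∈ range (N + 1), s j * sin (j * (2 * t)) -
        2 * sin t * ∑ j ∈ range (N + 1), (((N + 1 : ℕ) : ℝ) - j) * (s j * cos (j * (2 * t))) := by
  have shifted : ∑ j ∈ range N, (N + 1 - j) * s (j + 1) * sin ((2 * j + 1) * t) =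
      ∑ j ∈ range (N + 1), (N + 2 - j) * s j * sin ((2 * j - 1) * t) := by
    rw [sum_range_succ', hs, mul_zero, zero_mul, add_zero]
    refine sum_congr rfl fun j _ ↦ ?_
    push_cast
    ring_nf
  have extended : ∑ j ∈ range N, ((N : ℝ) - j) * s j * sin ((2 * j + 1) * t) =
      ∑ j ∈ range (N + 1), ((N : ℝ) - j) * s j * sin ((2 * j + 1) * t) := by
    rw [sum_range_succ, sub_self, zero_mul, zero_mul, add_zero]
  simp only [sub_mul _ _ (sin _)]
  rw [sum_sub_distrib, shifted, extended, ← sum_sub_distrib, mul_sum, mul_sum, ← sum_sub_distrib]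
  refine sum_congr rfl fun j _ ↦ ?_
  rw [show (2 * (j : ℝ) - 1) * t = j * (2 * t) - t by ring,
    show (2 * (j : ℝ) + 1) * t = j * (2 * t) + t by ring, sin_sub, sin_add]
  push_cast
  ring

theorem sq_mul_sum_weighted_sin_diff {N : ℕ} {φ : ℝ} (hφ : sin ((N + 1 : ℕ) * (2 * φ)) = 0)
    (t : ℝ) :
    2 * (sin t ^ 2 - sin φ ^ 2) ^ 2 * ∑ j ∈ range N,
        ((N + 1 - j) * sin ((j + 1 : ℕ) * (2 * φ)) - (N - j) * sin (j * (2 * φ))) *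
          sin ((2 * j + 1) * t) =
      (sin t ^ 2 - sin φ ^ 2) * (N + 1) * sin t * sin (2 * φ) +
        sin φ ^ 2 * cos t * sin (N * (2 * φ)) * sin ((N + 1 : ℕ) * (2 * t)) := by
  have sin_sum := cos_sub_cos_mul_sum_sin_mul_sin (2 * φ) (2 * t) N
  have fejer_sum := cos_sub_cos_mul_fejer_sum (2 * φ) (2 * t) (N + 1)
  have half_angle : cos (2 * φ) - cos (2 * t) = 2 * (sin t ^ 2 - sin φ ^ 2) := by
    rw [sin_sq_eq_half_sub, sin_sq_eq_half_sub]
    ring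
  rw [hφ, half_angle] at sin_sum fejer_sum
  rw [sin_two_mul t] at fejer_sum
  rw [sum_weighted_diff_mul_sin_odd (s := fun j ↦ sin (j * (2 * φ))) (by simp)]
  push_cast at sin_sum fejer_sum ⊢
  linear_combination (-sin φ ^ 2 * cos t) * sin_sum - (sin t ^ 2 - sin φ ^ 2) * sin t * fejer_sum

theorem sin_mul_pi_div_pos {k : ℕ} {x : ℝ} (hk : 0 < k) (hkx : k < x) : 0 < sin (k * π / x) := by
  have hx : 0 < x := (Nat.cast_nonneg k).trans_lt hkx
  refine sin_pos_of_pos_of_lt_pi (by positivity) ?_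
  rw [div_lt_iff₀ hx, mul_comm π]
  gcongr

theorem eval_chebyshev_U_eq_prod (n : ℕ) (x : ℝ) :
    (Polynomial.Chebyshev.U ℝ n).eval x =
      2 ^ n * ∏ k ∈ Icc 1 n, (x - cos (k * π / (n + 1))) := by
  have roots_eq : (Polynomial.Chebyshev.U ℝ n).roots =
      (Multiset.range n).map fun k : ℕ ↦ cos ((k + 1) * π / (n + 1)) := by
    rw [Polynomial.Chebyshev.roots_U_real, image_val]
    exact Multiset.dedup_eq_self.mpr (Polynomial.Chebyshev.roots_U_real_nodup n)
  have splits : (Polynomial.Chebyshev.U ℝ n).Splits := by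
    rw [Polynomial.splits_iff_card_roots, roots_eq, Polynomial.Chebyshev.natDegree_U_natCast,
      Multiset.card_map, Multiset.card_range]
  rw [splits.eval_eq_prod_roots, roots_eq, Polynomial.Chebyshev.leadingCoeff_U_natCast,
    Multiset.map_map, prod_Icc_one_eq_prod_range]
  push_cast
  rfl

theorem sin_two_mul_add_two_mul_eq_prod (N : ℕ) (t : ℝ) :
    sin ((2 * N + 2) * t) = 2 * (N + 1) * sin t * cos t *
      ∏ k ∈ Icc 1 N, (1 - sin t ^ 2 / sin (k * π / (2 * N + 2)) ^ 2) := by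
  have at_one := Polynomial.Chebyshev.U_eval_one (R := ℝ) (N : ℤ)
  have at_cos := Polynomial.Chebyshev.U_real_cos (2 * t) (N : ℤ)
  rw [eval_chebyshev_U_eq_prod] at at_one at_cos
  push_cast at at_one at_cos
  have normalized : ∏ k ∈ Icc 1 N, (cos (2 * t) - cos (k * π / (N + 1))) =
      (∏ k ∈ Icc 1 N, (1 - cos (k * π / (N + 1)))) *
        ∏ k ∈ Icc 1 N, (1 - sin t ^ 2 / sin (k * π / (2 * N + 2)) ^ 2) := by
    rw [← prod_mul_distrib]
    refine prod_congr rfl fun k hk ↦ ?_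
    obtain ⟨one_le, le_N⟩ := mem_Icc.mp hk
    have sin_pos : 0 < sin (k * π / (2 * N + 2)) :=
      sin_mul_pi_div_pos one_le (by norm_cast; omega)
    rw [show k * π / (N + 1) = 2 * (k * π / (2 * N + 2)) by field_simp, cos_two_mul_eq_one_sub,
      cos_two_mul_eq_one_sub]
    generalize sin (k * π / (2 * N + 2)) = z at sin_pos ⊢
    field_simp
    ring
  rw [show (2 * (N : ℝ) + 2) * t = (N + 1) * (2 * t) by ring, ← at_cos, normalized, sin_two_mul,
    ← mul_assoc (2 ^ N), at_one]
  ring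

theorem mul_sum_extremalCoeff_mul_sin {N : ℕ} (hN : 1 ≤ N) (t : ℝ) :
    ((N + 1) * sin (π / (N + 1))) *
        ∑ j ∈ Icc 1 N, extremalCoeff N j * sin ((2 * (j : ℝ) - 1) * t) =
      ∑ j ∈ range N,
        ((N + 1 - j) * sin ((j + 1 : ℕ) * (π / (N + 1))) - (N - j) * sin (j * (π / (N + 1)))) *
          sin ((2 * j + 1) * t) := by
  have sin_pos := sin_pi_div_add_one_pos hN
  rw [sum_Icc_one_eq_sum_range, mul_sum]
  refine sum_congr rfl fun j _ ↦ ?_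
  rw [extremalCoeff, ← mul_assoc, mul_div_cancel₀ _ (by positivity)]
  push_cast
  ring_nf

theorem sum_extremalCoeff_mul_sin {N : ℕ} (hN : 1 ≤ N) {t : ℝ}
    (ht : sin t ^ 2 ≠ sin (π / (2 * N + 2)) ^ 2) :
    ∑ j ∈ Icc 1 N, extremalCoeff N j * sin ((2 * (j : ℝ) - 1) * t) =
      sin t / (2 * (sin t ^ 2 - sin (π / (2 * N + 2)) ^ 2)) +
        sin (π / (2 * N + 2)) ^ 2 * cos t * sin ((2 * N + 2) * t) /
          (2 * (N + 1) * (sin t ^ 2 - sin (π / (2 * N + 2)) ^ 2) ^ 2) := by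
  have double_angle : 2 * (π / (2 * N + 2)) = π / (N + 1) := by field_simp
  have full_angle : (N + 1 : ℕ) * (π / (N + 1)) = π := by push_cast; field_simp
  have sin_last : sin (N * (π / (N + 1))) = sin (π / (N + 1)) := by
    rw [← sin_pi_sub]
    congr 1
    field_simp
    ring
  have closed_form := sq_mul_sum_weighted_sin_diff (N := N) (φ := π / (2 * N + 2))
    (by rw [double_angle, full_angle, sin_pi]) t
  rw [double_angle, ← mul_sum_extremalCoeff_mul_sin hN, sin_last,
    show (N + 1 : ℕ) * (2 * t) = (2 * N + 2) * t by push_cast; ring] at closed_form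
  have sin_pos := sin_pi_div_add_one_pos hN
  have denom_ne := sub_ne_zero.mpr ht
  generalize sin ((2 * N + 2) * t) = S at closed_form ⊢
  generalize ∑ j ∈ Icc 1 N, extremalCoeff N j * sin ((2 * (j : ℝ) - 1) * t) = V at closed_form ⊢
  generalize sin (π / (2 * N + 2)) = z at closed_form denom_ne ⊢
  field_simp
  apply mul_left_cancel₀ sin_pos.ne'
  linear_combination closed_form

theorem extremal_im_product_formula (N : ℕ) (hN : 2 ≤ N) (a0 : ℕ → ℝ)
    (ha0 : ∀ j, a0 j =
      (((N : ℝ) - j + 2) * Real.sin (π * j / (N + 1)) -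
        ((N : ℝ) - j + 1) * Real.sin (π * (j - 1) / (N + 1))) /
      ((N + 1) * Real.sin (π / (N + 1))))
    (v : ℝ → ℝ)
    (hv : ∀ t, v t = ∑ j ∈ Finset.Icc 1 N, a0 j * Real.sin ((2 * (j : ℝ) - 1) * t)) :
    ∀ t : ℝ, Real.sin t ^ 2 ≠ Real.sin (π / (2 * N + 2)) ^ 2 →
      v t = Real.sin t / (Real.sin t ^ 2 - Real.sin (π / (2 * N + 2)) ^ 2) *
        (1 / 2 - Real.cos t ^ 2 *
          ∏ k ∈ Finset.Icc 2 N,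
            (1 - Real.sin t ^ 2 / Real.sin (k * π / (2 * N + 2)) ^ 2)) := by
  intro t ht
  have one_le : 1 ≤ N := by omega
  obtain rfl : a0 = extremalCoeff N := funext ha0
  have sin_pos : 0 < sin (π / (2 * N + 2)) := by
    simpa using sin_mul_pi_div_pos (k := 1) (x := 2 * N + 2) one_pos (by norm_cast; omega)
  have denom_ne : sin t ^ 2 - sin (π / (2 * N + 2)) ^ 2 ≠ 0 := sub_ne_zero.mpr ht
  rw [hv, sum_extremalCoeff_mul_sin one_le ht, sin_two_mul_add_two_mul_eq_prod,
    ← mul_prod_Ioc_eq_prod_Icc one_le, ← Icc_add_one_left_eq_Ioc, Nat.cast_one, one_mul]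
  generalize sin (π / (2 * N + 2)) = z at sin_pos denom_ne ⊢
  generalize ∏ k ∈ Icc 2 N, (1 - sin t ^ 2 / sin (k * π / (2 * N + 2)) ^ 2) = P
  field_simp
  ring
end
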